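/- Let r ≥ 4. Then every group homomorphism from the symplectic group Sp(2r, ℤ/2) to GL(2r + 1, ℂ) is trivial, i.e., sends every element to the identity matrix. -/

import Mathlib

/-!
Let `W` be the natural module over `ℤ/2` with its symplectic form `ω`, and let `ρ` be a
representation on `V` in which the transvection along some `e` acts nontrivially. The Siegel
transformations attached to the vectors `y` orthogonal to `e` are commuting involutions, and one of
them is that transvection, so they have a joint eigenvector negated by it. The signs of the
eigenvalues are described by a quadratic form `q` on the orthogonal of `e`, with polar form `ω`. For
every zero `a` of `q` orthogonal to `e`, the transvection along `a` turns the weight `q` into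
`q + ω a`. The weights so obtained are distinct when `a` ranges over a complement of `e` in its
orthogonal, so `dim V` is at least the number of zeros of `q` there. A quarter of the vectors of `W`
lie in that complement, and `q` vanishes on at least a quarter of them, so `|W| ≤ 16 dim V`. If
`16 dim V < |W|`, then every transvection therefore acts trivially, and the transvections generate.
-/

open Module

section JointEigenvectors

lemma exists_joint_eigenvector_of_involutions {R V ι : Type*} [Ring R] [AddCommGroup V]
    [Module R V] (F : ι → End R V) (hcomm : ∀ i j, Commute (F i) (F j))
    (hsq : ∀ i, F i * F i = 1) {p : Submodule R V} (hp : p ≠ ⊥)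
    (hFp : ∀ i, ∀ v ∈ p, F i v ∈ p) (s : Finset ι) :
    ∃ v ∈ p, v ≠ 0 ∧ ∀ i ∈ s, F i v = v ∨ F i v = -v := by
  classical
  induction s using Finset.induction_on with
  | empty =>
    obtain ⟨v, hvp, hv⟩ := p.ne_bot_iff.mp hp
    exact ⟨v, hvp, hv, by simp⟩
  | insert j s _ ih =>
    obtain ⟨v, hvp, hv, hs⟩ := ih
    by_cases hj : F j v + v = 0
    · refine ⟨v, hvp, hv, fun i hi => ?_⟩
      rcases Finset.mem_insert.mp hi with rfl | hi
      · exact .inr (eq_neg_of_add_eq_zero_left hj)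
      · exact hs i hi
    · refine ⟨F j v + v, p.add_mem (hFp j v hvp) hvp, hj, fun i hi => ?_⟩
      rcases Finset.mem_insert.mp hi with rfl | hi
      · left
        rw [map_add, ← End.mul_apply, hsq, End.one_apply, add_comm]
      · rw [map_add, ← End.mul_apply, (hcomm i j).eq, End.mul_apply]
        rcases hs i hi with h | h
        · exact .inl (by rw [h])
        · exact .inr (by rw [h, map_neg, neg_add])

lemma linearIndependent_of_joint_eigenvectors {K V ι κ : Type*} [Field K] [AddCommGroup V]
    [Module K V] {F : ι → End K V} (hcomm : ∀ i j, Commute (F i) (F j)) {v : κ → V}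
    (hv : ∀ k, v k ≠ 0) {μ : κ → ι → K} (hμ : μ.Injective)
    (hFv : ∀ k i, F i (v k) = μ k i • v k) : LinearIndependent K v := by
  have hindep := End.independent_iInf_maxGenEigenspace_of_forall_mapsTo F fun i j φ =>
    End.mapsTo_maxGenEigenspace_of_comm (hcomm j i) φ
  refine (hindep.comp hμ).linearIndependent _ (fun k => ?_) hv
  simp only [Function.comp_apply, Submodule.mem_iInf]
  exact fun i => End.genEigenspace_le_maximal _ _ 1 (End.mem_eigenspace_iff.mpr (hFv k i))

end JointEigenvectors

section IsometryGroup

variable {R W : Type*} [CommRing R] [AddCommGroup W] [Module R W]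

/-- The group of linear automorphisms preserving a bilinear form; it is the symplectic group of `W`
when `ω` is alternating and nondegenerate. -/
def isometryGroup (ω : LinearMap.BilinForm R W) : Subgroup (W ≃ₗ[R] W) where
  carrier := {g | ∀ x y, ω (g x) (g y) = ω x y}
  mul_mem' hg hh x y := (hg _ _).trans (hh x y)
  one_mem' _ _ := rfl
  inv_mem' {g} hg x y := by simpa using (hg (g⁻¹ x) (g⁻¹ y)).symm

variable {ω : LinearMap.BilinForm R W}

lemma isometryGroup_apply_smul_smul (g : isometryGroup ω) (x y : W) :
    ω (g • x) (g • y) = ω x y :=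
  g.2 x y

/-- The symplectic transvection `x ↦ x + ω v x • v`, as an isometry of `ω`. -/
def symplecticTransvection (hω : ω.IsAlt) (v : W) : isometryGroup ω :=
  ⟨LinearEquiv.transvection (hω v), fun x y => by
    simp only [LinearEquiv.transvection.apply, map_add, map_smul, LinearMap.add_apply,
      LinearMap.smul_apply, smul_eq_mul, hω.self_eq_zero]
    rw [← hω.neg_eq x v]
    ring⟩

variable (hω : ω.IsAlt)

lemma symplecticTransvection_smul (v x : W) :
    symplecticTransvection hω v • x = x + ω v x • v :=
  LinearEquiv.transvection.apply (hω v) x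

lemma symplecticTransvection_zero : symplecticTransvection hω 0 = 1 :=
  FaithfulSMul.eq_of_smul_eq_smul fun x : W => by simp [symplecticTransvection_smul]

lemma mul_symplecticTransvection (g : isometryGroup ω) (v : W) :
    g * symplecticTransvection hω v = symplecticTransvection hω (g • v) * g :=
  FaithfulSMul.eq_of_smul_eq_smul fun x : W => by
    simp only [mul_smul, symplecticTransvection_smul, isometryGroup_apply_smul_smul, smul_add,
      smul_comm g]

lemma fixedBy_subset_fixedBy_symplecticTransvection_mul (g : isometryGroup ω) (y : W) :
    MulAction.fixedBy W g ⊆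
      MulAction.fixedBy W (symplecticTransvection hω (g • y - y) * g) := by
  intro z (hz : g • z = z)
  have horth : ω (g • y - y) z = 0 := by
    rw [map_sub, LinearMap.sub_apply, sub_eq_zero]
    nth_rw 1 [← hz]
    exact isometryGroup_apply_smul_smul g y z
  rw [MulAction.mem_fixedBy, mul_smul, hz, symplecticTransvection_smul, horth, zero_smul, add_zero]

lemma mem_fixedBy_symplecticTransvection_mul {g : isometryGroup ω} {x : W}
    (hx : ω x (g • x) = 1) :
    x ∈ MulAction.fixedBy W (symplecticTransvection hω (g • x - x) * g) := by
  rw [MulAction.mem_fixedBy, mul_smul, symplecticTransvection_smul, map_sub, LinearMap.sub_apply,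
    hω.self_eq_zero, hx, zero_sub, neg_one_smul, neg_sub, add_sub_cancel]

lemma eq_of_forall_apply_eq (hnd : ω.Nondegenerate) {e f a b : W} (hf : ω e f = 1)
    (hab : ω a f = ω b f) (h : ∀ y, ω e y = 0 → ω a y = ω b y) : a = b := by
  refine sub_eq_zero.mp (hnd.1 _ fun z => ?_)
  have hz : ω e (z - ω e z • f) = 0 := by
    rw [map_sub, map_smul, hf, smul_eq_mul, mul_one, sub_self]
  rw [← sub_add_cancel z (ω e z • f), map_sub, LinearMap.sub_apply, map_add, map_add, h _ hz,
    map_smul, map_smul, hab, sub_self]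

end IsometryGroup

section CharTwo

lemma zmod_two_eq_zero_or_eq_one (c : ZMod 2) : c = 0 ∨ c = 1 := by
  decide +revert

variable {W : Type*} [AddCommGroup W] [Module (ZMod 2) W]

lemma exists_forall_apply_add_smul_eq_zero (f : Dual (ZMod 2) W) :
    ∃ b, ∀ y, f (y + f y • b) = 0 := by
  by_cases hf : ∃ b, f b = 1
  · obtain ⟨b, hb⟩ := hf
    refine ⟨b, fun y => ?_⟩
    rw [map_add, map_smul, hb, smul_eq_mul, mul_one, CharTwo.add_self_eq_zero]
  · have hf0 y : f y = 0 := (zmod_two_eq_zero_or_eq_one _).resolve_right (not_exists.mp hf y)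
    exact ⟨0, fun y => hf0 _⟩

lemma exists_forall_exists_add_smul_add_smul_eq_zero {B : LinearMap.BilinForm (ZMod 2) W}
    {q : W → ZMod 2} (hq : ∀ x y, q (x + y) = q x + q y + B x y) :
    ∃ a b, ∀ y, ∃ i j : ZMod 2, q (y + j • b + i • a) = 0 := by
  by_cases ha : ∃ a, q a = 1
  · -- If `q a = 1`, translation by `a` changes `q` on the vectors `B`-orthogonal to `a`.
    obtain ⟨a, ha⟩ := ha
    obtain ⟨b, hb⟩ := exists_forall_apply_add_smul_eq_zero (B.flip a)
    refine ⟨a, b, fun y => ?_⟩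
    rcases zmod_two_eq_zero_or_eq_one (q (y + B.flip a y • b)) with h | h
    · exact ⟨0, B.flip a y, by rw [zero_smul, add_zero, h]⟩
    · refine ⟨1, B.flip a y, ?_⟩
      rw [one_smul, hq, h, ha, ← LinearMap.BilinForm.flip_apply, hb, add_zero,
        CharTwo.add_self_eq_zero]
  · have hq0 y : q y = 0 := (zmod_two_eq_zero_or_eq_one _).resolve_right (not_exists.mp ha y)
    exact ⟨0, 0, fun y => ⟨0, 0, hq0 _⟩⟩

lemma card_le_four_mul_card_zeros [Finite W] {B : LinearMap.BilinForm (ZMod 2) W}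
    {q : W → ZMod 2} (hq : ∀ x y, q (x + y) = q x + q y + B x y) :
    Nat.card W ≤ 4 * Nat.card {x // q x = 0} := by
  obtain ⟨a, b, hab⟩ := exists_forall_exists_add_smul_add_smul_eq_zero hq
  let f : (ZMod 2 × ZMod 2) × {x // q x = 0} → W := fun p => p.2 + p.1.1 • a + p.1.2 • b
  have hf : f.Surjective := fun y => by
    obtain ⟨i, j, hij⟩ := hab y
    refine ⟨((i, j), ⟨_, hij⟩), ?_⟩
    simp only [f]
    rw [add_assoc (y + _), ZModModule.add_self, add_zero, add_assoc, ZModModule.add_self, add_zero]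
  calc Nat.card W ≤ Nat.card ((ZMod 2 × ZMod 2) × {x // q x = 0}) :=
        Nat.card_le_card_of_surjective f hf
    _ = 4 * Nat.card {x // q x = 0} := by
        rw [Nat.card_prod, Nat.card_prod, Nat.card_zmod]

lemma card_le_four_mul_card_ker_inf_ker [Finite W] (f g : Dual (ZMod 2) W) :
    Nat.card W ≤ 4 * Nat.card ↥(f.ker ⊓ g.ker) := by
  rw [← LinearMap.ker_prod, Submodule.card_eq_card_quotient_mul_card (f.prod g).ker, mul_comm,
    Nat.card_congr (f.prod g).quotKerEquivRange.toEquiv]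
  gcongr
  calc Nat.card (f.prod g).range ≤ Nat.card (ZMod 2 × ZMod 2) :=
        Nat.card_le_card_of_injective _ Subtype.val_injective
    _ = 4 := by rw [Nat.card_prod, Nat.card_zmod]

variable {ω : LinearMap.BilinForm (ZMod 2) W}

lemma exists_apply_eq_one (hnd : ω.Nondegenerate) {u : W} (hu : u ≠ 0) : ∃ z, ω u z = 1 := by
  by_contra! h
  exact hu (hnd.1 u fun z => (zmod_two_eq_zero_or_eq_one _).resolve_right (h z))

lemma exists_apply_eq_one_and_apply_eq_one (hnd : ω.Nondegenerate) {u w : W} (hu : u ≠ 0)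
    (hw : w ≠ 0) : ∃ z, ω u z = 1 ∧ ω w z = 1 := by
  obtain ⟨a, hua⟩ := exists_apply_eq_one hnd hu
  obtain ⟨b, hwb⟩ := exists_apply_eq_one hnd hw
  rcases zmod_two_eq_zero_or_eq_one (ω w a) with hwa | hwa
  · rcases zmod_two_eq_zero_or_eq_one (ω u b) with hub | hub
    · exact ⟨a + b, by simp [hua, hub], by simp [hwa, hwb]⟩
    · exact ⟨b, hub, hwb⟩
  · exact ⟨a, hua, hwa⟩

lemma apply_comm_of_isAlt (hω : ω.IsAlt) (x y : W) : ω x y = ω y x := by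
  rw [← hω.neg_eq, ZModModule.neg_eq_self]

variable (hω : ω.IsAlt)

lemma exists_fixedBy_ssubset_fixedBy_mul (hnd : ω.Nondegenerate) {g : isometryGroup ω}
    (hg : g ≠ 1) :
    ∃ h ∈ Subgroup.closure (Set.range (symplecticTransvection hω)),
      MulAction.fixedBy W g ⊂ MulAction.fixedBy W (h * g) := by
  set H := Subgroup.closure (Set.range (symplecticTransvection hω))
  have hmem : ∀ v, symplecticTransvection hω v ∈ H := fun v => Subgroup.subset_closure ⟨v, rfl⟩
  obtain ⟨x, hx⟩ : ∃ x : W, g • x ≠ x := by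
    by_contra! h
    exact hg (FaithfulSMul.eq_of_smul_eq_smul fun x : W => by rw [h, one_smul])
  suffices ∃ h ∈ H, MulAction.fixedBy W g ⊆ MulAction.fixedBy W (h * g) ∧
      ω x ((h * g) • x) = 1 by
    obtain ⟨h, hh, hsub, hxh⟩ := this
    refine ⟨_, H.mul_mem (hmem ((h * g) • x - x)) hh, ?_⟩
    rw [mul_assoc]
    exact (Set.ssubset_iff_of_subset (hsub.trans
      (fixedBy_subset_fixedBy_symplecticTransvection_mul hω _ _))).mpr
      ⟨x, mem_fixedBy_symplecticTransvection_mul hω hxh, hx⟩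
  -- If `ω x (g • x) = 0`, a preliminary transvection along a suitable `g • y - y` makes it `1`.
  rcases zmod_two_eq_zero_or_eq_one (ω x (g • x)) with hxg | hxg
  · obtain ⟨y, hy, hy'⟩ := exists_apply_eq_one_and_apply_eq_one hnd (u := g • x - x)
      (w := g⁻¹ • x - x) (sub_ne_zero.mpr hx)
      (sub_ne_zero.mpr fun h => hx (inv_smul_eq_iff.mp h).symm)
    refine ⟨_, hmem (g • y - y), fixedBy_subset_fixedBy_symplecticTransvection_mul hω g y, ?_⟩
    rw [mul_smul, symplecticTransvection_smul]
    have hyx : ω (g • y - y) (g • x) = 1 := by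
      rw [map_sub, LinearMap.sub_apply, isometryGroup_apply_smul_smul, ← map_sub, ← hω.neg_eq,
        ← LinearMap.neg_apply, ← map_neg, neg_sub, hy]
    have hxy : ω x (g • y - y) = 1 := by
      rw [map_sub, ← isometryGroup_apply_smul_smul g⁻¹, inv_smul_smul, ← LinearMap.sub_apply,
        ← map_sub, hy']
    rw [map_add, hxg, hyx, one_smul, hxy, zero_add]
  · exact ⟨1, H.one_mem, by rw [one_mul], by rwa [one_mul]⟩

theorem closure_range_symplecticTransvection [Finite W] (hnd : ω.Nondegenerate) :
    Subgroup.closure (Set.range (symplecticTransvection hω)) = ⊤ := by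
  refine (Subgroup.eq_top_iff' _).mpr fun g => ?_
  induction hF : MulAction.fixedBy W g using WellFoundedGT.induction generalizing g with
  | ind F ih =>
    by_cases hg : g = 1
    · exact hg ▸ Subgroup.one_mem _
    obtain ⟨h, hh, hlt⟩ := exists_fixedBy_ssubset_fixedBy_mul hω hnd hg
    exact (Subgroup.mul_mem_cancel_left _ hh).mp (ih _ (hF ▸ hlt) (h * g) rfl)

lemma symplecticTransvection_mul_self (v : W) :
    symplecticTransvection hω v * symplecticTransvection hω v = 1 :=
  FaithfulSMul.eq_of_smul_eq_smul fun x : W => by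
    simp only [mul_smul, symplecticTransvection_smul, map_add, map_smul, hω.self_eq_zero,
      smul_zero, add_zero, one_smul, add_assoc, ZModModule.add_self]

/-- The transformation `x ↦ x + ω y x • e + ω e x • (y + e)` attached to `e` and a vector `y`
orthogonal to `e`. It is the composition of the usual Siegel transformation
`x ↦ x + ω y x • e + ω e x • y` with the transvection along `e`; this composition is a product of
two transvections. -/
def siegel (e y : W) : isometryGroup ω :=
  symplecticTransvection hω y * symplecticTransvection hω (y + e)

lemma siegel_zero (e : W) : siegel hω e 0 = symplecticTransvection hω e := by
  rw [siegel, symplecticTransvection_zero, one_mul, zero_add]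

lemma siegel_smul {e y : W} (hy : ω e y = 0) (x : W) :
    siegel hω e y • x = x + ω y x • e + ω e x • (y + e) := by
  have hye : ω y e = 0 := by rw [apply_comm_of_isAlt hω, hy]
  simp only [siegel, mul_smul, symplecticTransvection_smul, map_add, map_smul,
    LinearMap.add_apply, hω.self_eq_zero, hye, add_zero, smul_zero]
  rw [← sub_eq_zero, ← ZModModule.add_self (ω y x • y)]
  module

lemma mul_siegel (g : isometryGroup ω) (e y : W) :
    g * siegel hω e y = siegel hω (g • e) (g • y) * g := by
  rw [siegel, siegel, ← mul_assoc, mul_symplecticTransvection hω g y, mul_assoc,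
    mul_symplecticTransvection hω g (y + e), ← mul_assoc, smul_add]

lemma siegel_mul_siegel {e y z : W} (hy : ω e y = 0) (hz : ω e z = 0) :
    siegel hω e y * siegel hω e z =
      symplecticTransvection hω ((ω y z + 1) • e) * siegel hω e (y + z) := by
  have hyz : ω e (y + z) = 0 := by rw [map_add, hy, hz, add_zero]
  have hye : ω y e = 0 := by rw [apply_comm_of_isAlt hω, hy]
  have hidem : (ω y z + 1) * (ω y z + 1) = ω y z + 1 := by
    rcases zmod_two_eq_zero_or_eq_one (ω y z) with h | h <;> rw [h] <;> rfl
  have hcoeff (x : W) : ((ω y z + 1) * ω e x) • (ω y z + 1) • e = (ω y z + 1) • ω e x • e := by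
    rw [smul_smul, mul_right_comm, hidem, smul_smul]
  refine FaithfulSMul.eq_of_smul_eq_smul fun x : W => ?_
  simp only [mul_smul, siegel_smul hω, symplecticTransvection_smul, map_add, map_smul,
    LinearMap.add_apply, LinearMap.smul_apply, hω.self_eq_zero, hy, hz, hyz, hye, smul_eq_mul,
    mul_zero, add_zero, hcoeff]
  module

lemma commute_siegel {e y z : W} (hy : ω e y = 0) (hz : ω e z = 0) :
    Commute (siegel hω e y) (siegel hω e z) := by
  rw [Commute, SemiconjBy, siegel_mul_siegel hω hy hz, siegel_mul_siegel hω hz hy,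
    apply_comm_of_isAlt hω y z, add_comm y z]

lemma siegel_mul_self {e y : W} (hy : ω e y = 0) : siegel hω e y * siegel hω e y = 1 := by
  rw [siegel_mul_siegel hω hy hy, hω.self_eq_zero, zero_add, one_smul, ZModModule.add_self,
    siegel_zero, symplecticTransvection_mul_self]

end CharTwo

section Weights

variable {K : Type*} [Field K]

variable (K) in
/-- The character `i ↦ (-1) ^ i` of `ℤ/2` with values in `K`. -/
def signChar : AddChar (ZMod 2) K :=
  AddChar.zmodChar 2 (neg_one_sq : (-1 : K) ^ 2 = 1)

lemma signChar_one : signChar K 1 = -1 :=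
  pow_one (-1)

lemma signChar_injective [NeZero (2 : K)] : (signChar K : ZMod 2 → K).Injective := by
  have hne : signChar K 0 ≠ signChar K 1 := by
    rw [AddChar.map_zero_eq_one, signChar_one]
    exact fun h => two_ne_zero (α := K) (by linear_combination h)
  intro i j hij
  rcases zmod_two_eq_zero_or_eq_one i with rfl | rfl <;>
    rcases zmod_two_eq_zero_or_eq_one j with rfl | rfl
  exacts [rfl, (hne hij).elim, (hne hij.symm).elim, rfl]

variable {W V : Type*} [AddCommGroup W] [Module (ZMod 2) W] {ω : LinearMap.BilinForm (ZMod 2) W}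
  (hω : ω.IsAlt) [AddCommGroup V] [Module K V] {ρ : Representation K (isometryGroup ω) V}

variable (ρ) in
/-- `v` is a joint eigenvector of the Siegel transformations attached to `e`, with eigenvalues
encoded by the function `q`, of which only the values orthogonally to `e` matter. The shift by `1`
makes `q` a quadratic form there when `q 0 = 0`, that is, when the transvection along `e` negates
`v`. -/
def HasSiegelWeight (e : W) (q : W → ZMod 2) (v : V) : Prop :=
  ∀ y, ω e y = 0 → ρ (siegel hω e y) v = signChar K (q y + 1) • v

variable {hω} {e : W} {q : W → ZMod 2} {v : V}

lemma exists_hasSiegelWeight [NeZero (2 : K)] [Finite W]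
    (he : ρ (symplecticTransvection hω e) ≠ 1) :
    ∃ q v, v ≠ 0 ∧ q 0 = 0 ∧ HasSiegelWeight hω ρ e q v := by
  classical
  have := Fintype.ofFinite {y // ω e y = 0}
  let F (y : {y // ω e y = 0}) : End K V := ρ (siegel hω e y)
  have hcomm y z : Commute (F y) (F z) := (commute_siegel hω y.2 z.2).map ρ
  have hsq y : F y * F y = 1 := by rw [← map_mul, siegel_mul_self hω y.2, map_one]
  let o : {y // ω e y = 0} := ⟨0, map_zero _⟩
  have hFo : F o = ρ (symplecticTransvection hω e) := by rw [← siegel_zero]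
  obtain ⟨w, hw⟩ : ∃ w, F o w ≠ w := by
    by_contra! h
    exact he (hFo ▸ LinearMap.ext h)
  have hp : End.eigenspace (F o) (-1) ≠ ⊥ := by
    refine (Submodule.ne_bot_iff _).mpr ⟨F o w - w, ?_, sub_ne_zero.mpr hw⟩
    rw [End.mem_eigenspace_iff, map_sub, ← End.mul_apply, hsq, End.one_apply, neg_one_smul, neg_sub]
  obtain ⟨v, hvp, hv, hFv⟩ := exists_joint_eigenvector_of_involutions F hcomm hsq hp
    (fun y => End.mapsTo_genEigenspace_of_comm (hcomm o y) _ 1) Finset.univ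
  have hov : F o v = -v := by rw [End.mem_eigenspace_iff.mp hvp, neg_one_smul]
  refine ⟨fun y => if ρ (siegel hω e y) v = v then 1 else 0, v, hv, if_neg ?_, fun y hy => ?_⟩
  · intro h
    have hsign : signChar K 0 • v = signChar K 1 • v := by
      rw [AddChar.map_zero_eq_one, signChar_one, one_smul, neg_one_smul, ← hov, h]
    exact zero_ne_one (signChar_injective (smul_left_injective K hv hsign))
  · beta_reduce
    split_ifs with h
    · rw [h, CharTwo.add_self_eq_zero, AddChar.map_zero_eq_one, one_smul]
    · rw [zero_add, signChar_one, neg_one_smul]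
      exact (hFv ⟨y, hy⟩ (Finset.mem_univ _)).resolve_left h

namespace HasSiegelWeight

lemma apply_add [NeZero (2 : K)] (h : HasSiegelWeight hω ρ e q v) (hv : v ≠ 0) (hq : q 0 = 0)
    {y z : W} (hy : ω e y = 0) (hz : ω e z = 0) : q (y + z) = q y + q z + ω y z := by
  have hyz : ω e (y + z) = 0 := by rw [map_add, hy, hz, add_zero]
  have htransvection (c : ZMod 2) :
      ρ (symplecticTransvection hω (c • e)) v = signChar K c • v := by
    rcases zmod_two_eq_zero_or_eq_one c with rfl | rfl
    · rw [zero_smul, symplecticTransvection_zero, map_one, AddChar.map_zero_eq_one, one_smul,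
        End.one_apply]
    · rw [one_smul, ← siegel_zero, h 0 (map_zero _), hq, zero_add]
  have hmul := DFunLike.congr_fun (congrArg ρ (siegel_mul_siegel hω hy hz)) v
  rw [map_mul, map_mul, End.mul_apply, End.mul_apply, h z hz, h (y + z) hyz, map_smul, map_smul,
    h y hy, htransvection, smul_smul, smul_smul, ← AddChar.map_add_eq_mul,
    ← AddChar.map_add_eq_mul] at hmul
  have hexp := signChar_injective (smul_left_injective K hv hmul)
  linear_combination -hexp - ω y z * CharTwo.two_eq_zero (R := ZMod 2)

lemma map_of_smul_eq (h : HasSiegelWeight hω ρ e q v) {g : isometryGroup ω} (hg : g • e = e) :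
    HasSiegelWeight hω ρ e (fun y => q (g⁻¹ • y)) (ρ g v) := by
  intro y hy
  have hy' : ω e (g⁻¹ • y) = 0 := by
    rw [← isometryGroup_apply_smul_smul g, hg, smul_inv_smul, hy]
  have hconj : siegel hω e y * g = g * siegel hω e (g⁻¹ • y) := by
    rw [mul_siegel, hg, smul_inv_smul]
  rw [← End.mul_apply, ← map_mul, hconj, map_mul, End.mul_apply, h _ hy', map_smul]

lemma map_symplecticTransvection [NeZero (2 : K)] (h : HasSiegelWeight hω ρ e q v) (hv : v ≠ 0)
    (hq : q 0 = 0) {a : W} (ha : ω e a = 0) (hqa : q a = 0) :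
    HasSiegelWeight hω ρ e (fun y => q y + ω a y) (ρ (symplecticTransvection hω a) v) := by
  have hae : ω a e = 0 := by rw [apply_comm_of_isAlt hω, ha]
  have hinv : (symplecticTransvection hω a)⁻¹ = symplecticTransvection hω a :=
    inv_eq_of_mul_eq_one_left (symplecticTransvection_mul_self hω a)
  have hfix : symplecticTransvection hω a • e = e := by
    rw [symplecticTransvection_smul, hae, zero_smul, add_zero]
  have hshift {y : W} (hy : ω e y = 0) : q (symplecticTransvection hω a • y) = q y + ω a y := by
    rw [symplecticTransvection_smul]
    rcases zmod_two_eq_zero_or_eq_one (ω a y) with hay | hay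
    · rw [hay, zero_smul, add_zero, add_zero]
    · rw [hay, one_smul, h.apply_add hv hq hy ha, hqa, add_zero, apply_comm_of_isAlt hω y a, hay]
  intro y hy
  refine (h.map_of_smul_eq hfix y hy).trans ?_
  beta_reduce
  rw [hinv, hshift hy]

lemma linearIndependent_map_symplecticTransvection [NeZero (2 : K)]
    (h : HasSiegelWeight hω ρ e q v) (hv : v ≠ 0) (hq : q 0 = 0) (hnd : ω.Nondegenerate) {f : W}
    (hf : ω e f = 1) :
    LinearIndependent K fun a : {a : ↥((ω e).ker ⊓ (ω f).ker) // q a = 0} =>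
      ρ (symplecticTransvection hω a) v := by
  refine linearIndependent_of_joint_eigenvectors
    (F := fun y : {y // ω e y = 0} => ρ (siegel hω e y))
    (μ := fun a y => signChar K (q y + ω a y + 1))
    (fun y z => (commute_siegel hω y.2 z.2).map ρ)
    (fun a => (map_ne_zero_iff _ (ρ.apply_bijective _).injective).mpr hv) (fun a b hab => ?_)
    (fun a y => h.map_symplecticTransvection hv hq a.1.2.1 a.2 y y.2)
  have happly (c : {a : ↥((ω e).ker ⊓ (ω f).ker) // q a = 0}) : ω c f = 0 := by
    rw [apply_comm_of_isAlt hω]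
    exact c.1.2.2
  refine Subtype.ext <| Subtype.ext <|
    eq_of_forall_apply_eq hnd hf ((happly a).trans (happly b).symm) fun y hy => ?_
  exact add_left_cancel (add_right_cancel (signChar_injective (congr_fun hab ⟨y, hy⟩)))

end HasSiegelWeight

lemma card_le_sixteen_mul_finrank [NeZero (2 : K)] [Finite W] [FiniteDimensional K V]
    (hnd : ω.Nondegenerate) (he : ρ (symplecticTransvection hω e) ≠ 1) :
    Nat.card W ≤ 16 * finrank K V := by
  have he0 : e ≠ 0 := by
    rintro rfl
    exact he (by rw [symplecticTransvection_zero, map_one])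
  obtain ⟨f, hf⟩ := exists_apply_eq_one hnd he0
  obtain ⟨q, v, hv, hq, hqv⟩ := exists_hasSiegelWeight he
  let U := (ω e).ker ⊓ (ω f).ker
  have := Fintype.ofFinite {a : U // q a = 0}
  have hquad (x y : U) : q ↑(x + y) = q x + q y + ω.restrict U x y :=
    hqv.apply_add hv hq x.2.1 y.2.1
  calc Nat.card W ≤ 4 * Nat.card U := card_le_four_mul_card_ker_inf_ker _ _
    _ ≤ 4 * (4 * Nat.card {a : U // q a = 0}) := by
        gcongr
        exact card_le_four_mul_card_zeros hquad
    _ = 16 * Fintype.card {a : U // q a = 0} := by rw [Nat.card_eq_fintype_card]; ring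
    _ ≤ 16 * finrank K V := by
        gcongr
        exact (hqv.linearIndependent_map_symplecticTransvection hv hq hnd
          hf).fintype_card_le_finrank

theorem representation_isometryGroup_eq_one [NeZero (2 : K)] [Finite W] [FiniteDimensional K V]
    (hω : ω.IsAlt) (hnd : ω.Nondegenerate) (hV : 16 * finrank K V < Nat.card W)
    (ρ : Representation K (isometryGroup ω) V) : ρ = 1 := by
  refine MonoidHom.eq_of_eqOn_dense (closure_range_symplecticTransvection hω hnd) ?_
  rintro _ ⟨e, rfl⟩
  by_contra he
  exact hV.not_ge (card_le_sixteen_mul_finrank hnd he)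

end Weights

section Matrix

open Matrix

variable {l R : Type*} [Fintype l] [DecidableEq l] [CommRing R]

lemma mem_symplecticGroup_iff_toBilin' {A : Matrix (l ⊕ l) (l ⊕ l) R} :
    A ∈ symplecticGroup l R ↔
      ∀ x y, (J l R).toBilin' (A *ᵥ x) (A *ᵥ y) = (J l R).toBilin' x y := by
  rw [SymplecticGroup.mem_iff', ← Matrix.toBilin'.injective.eq_iff, ← Matrix.toBilin'_comp,
    LinearMap.BilinForm.ext_iff]
  simp

lemma isAlt_toBilin'_J : (J l R).toBilin'.IsAlt := by
  intro x
  simp only [Matrix.toBilin'_apply', J, Matrix.fromBlocks_mulVec, dotProduct, Fintype.sum_sum_type,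
    Sum.elim_inl, Sum.elim_inr, Matrix.zero_mulVec, Matrix.one_mulVec, Matrix.neg_mulVec, zero_add,
    add_zero, Pi.neg_apply, Function.comp_apply, mul_neg, mul_comm, Finset.sum_neg_distrib,
    neg_add_cancel]

lemma nondegenerate_toBilin'_J : (J l R).toBilin'.Nondegenerate :=
  (Matrix.Nondegenerate.of_det_mem_nonZeroDivisors (isUnit_det_J l R).mem_nonZeroDivisors).toBilin'

variable (l R) in
/-- The symplectic group of matrices, as the group of isometries of the standard symplectic form on
`l ⊕ l → R`; a matrix `A` corresponds to `x ↦ A *ᵥ x`. -/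
def symplecticGroupEquivIsometryGroup : symplecticGroup l R ≃* isometryGroup (J l R).toBilin' where
  toFun A := ⟨DistribMulAction.toLinearEquiv R (l ⊕ l → R) A,
    mem_symplecticGroup_iff_toBilin'.mp A.2⟩
  invFun g := ⟨LinearMap.toMatrix' (g : (l ⊕ l → R) ≃ₗ[R] (l ⊕ l → R)).toLinearMap,
    mem_symplecticGroup_iff_toBilin'.mpr fun x y => by
      simp only [LinearMap.toMatrix'_mulVec]; exact g.2 x y⟩
  left_inv A := Subtype.ext (LinearMap.toMatrix'_toLin' A.1)
  right_inv g := Subtype.ext <| LinearEquiv.ext fun x =>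
    LinearMap.toMatrix'_mulVec g.1.toLinearMap x
  map_mul' A B := Subtype.ext <| LinearEquiv.ext fun x => mul_smul A B x

end Matrix

lemma sixteen_mul_two_mul_add_one_lt_four_pow {r : ℕ} (hr : 4 ≤ r) :
    16 * (2 * r + 1) < 4 ^ r := by
  induction r, hr using Nat.le_induction with
  | base => norm_num
  | succ r _ ih => rw [pow_succ]; lia

theorem stmt_15_general {l n K : Type*} [Fintype l] [DecidableEq l] [Fintype n] [DecidableEq n]
    [Field K] [NeZero (2 : K)] (h : 16 * Fintype.card n < 4 ^ Fintype.card l)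
    (f : Matrix.symplecticGroup l (ZMod 2) →* GL n K) : ∀ x, f x = 1 := by
  intro x
  let ρ : Representation K (isometryGroup (Matrix.J l (ZMod 2)).toBilin') (n → K) :=
    (Units.coeHom _).comp (Matrix.GeneralLinearGroup.toLin.toMonoidHom.comp
      (f.comp (symplecticGroupEquivIsometryGroup l (ZMod 2)).symm.toMonoidHom))
  have hcard : Nat.card (l ⊕ l → ZMod 2) = 4 ^ Fintype.card l := by
    rw [Nat.card_fun, Nat.card_zmod, Nat.card_eq_fintype_card, Fintype.card_sum, ← two_mul, pow_mul]
    norm_num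
  have hρ : ρ = 1 := representation_isometryGroup_eq_one isAlt_toBilin'_J nondegenerate_toBilin'_J
    (by rwa [finrank_fintype_fun_eq_card, hcard]) ρ
  have hx := DFunLike.congr_fun hρ (symplecticGroupEquivIsometryGroup l (ZMod 2) x)
  refine Matrix.GeneralLinearGroup.toLin.injective (Units.ext ?_)
  simpa [ρ] using hx

/-- Remark 8.4: for `r ≥ 4`, every homomorphism from the symplectic group
`Sp(2r, ℤ/2)` to `GL(2r+1, ℂ)` is trivial. -/
theorem stmt_15 (r : ℕ) (hr : 4 ≤ r)
    (f : Matrix.symplecticGroup (Fin r) (ZMod 2) →* GL (Fin (2 * r + 1)) ℂ) :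
    ∀ x, f x = 1 :=
  stmt_15_general (by simpa using sixteen_mul_two_mul_add_one_lt_four_pow hr) f
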